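/- arXiv:1604.00753 — 2 statements merged into one kernel-verified Lean document; each statement's English description precedes it below -/
import Mathlib

section
/- ∫₀¹ x·log Γ(x)·sin(2πx) dx = γ/(4π), where γ is the Euler–Mascheroni constant. -/
open Real Filter Topology MeasureTheory intervalIntegral

/-- The integral of `(1 - cos (4 N θ)) cot θ` over a quarter period. -/
lemma integral_one_sub_cos_mul_cot (N : ℕ) :
    IntervalIntegrable (fun θ ↦ (1 - cos (4 * N * θ)) * (cos θ / sin θ)) volume 0 (π / 2) ∧
      ∫ θ in (0 : ℝ)..π / 2, (1 - cos (4 * N * θ)) * (cos θ / sin θ) =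
        ∑ j ∈ Finset.range N, 2 / (2 * (j : ℝ) + 1) := by
  induction N with
  | zero => simp
  | succ N ih =>
    obtain ⟨hint, hval⟩ := ih
    have key : (fun θ : ℝ ↦ (1 - cos (4 * (N + 1 : ℕ) * θ)) * (cos θ / sin θ)) =
        fun θ ↦ (1 - cos (4 * N * θ)) * (cos θ / sin θ) +
          (2 * sin ((4 * N + 2) * θ) + sin ((4 * N + 4) * θ) + sin (4 * N * θ)) := by
      funext θ
      have h₁ : cos (4 * (N + 1 : ℕ) * θ) = cos ((4 * N + 2) * θ + 2 * θ) := by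
        push_cast; ring_nf
      have h₂ : cos (4 * N * θ) = cos ((4 * N + 2) * θ - 2 * θ) := by ring_nf
      have h₃ : sin ((4 * N + 4) * θ) = sin ((4 * N + 2) * θ + 2 * θ) := by ring_nf
      have h₄ : sin (4 * N * θ) = sin ((4 * N + 2) * θ - 2 * θ) := by ring_nf
      rw [h₁, h₂, h₃, h₄, cos_add, cos_sub, sin_add, sin_sub, sin_two_mul, cos_two_mul]
      by_cases hs : sin θ = 0
      · have : sin ((4 * N + 2) * θ) = 0 := by
          obtain ⟨k, hk⟩ := sin_eq_zero_iff.mp hs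
          rw [← hk, show (4 * (N : ℝ) + 2) * (k * π) = (((4 * N + 2) * k : ℤ) : ℝ) * π by
            push_cast; ring, sin_int_mul_pi]
        simp [hs, this]
      · field_simp
        ring
    have hcont : Continuous fun θ : ℝ ↦
        2 * sin ((4 * N + 2) * θ) + sin ((4 * N + 4) * θ) + sin (4 * N * θ) := by fun_prop
    have hI : ∫ θ in (0 : ℝ)..π / 2,
        (2 * sin ((4 * N + 2) * θ) + sin ((4 * N + 4) * θ) + sin (4 * N * θ)) =
          2 / (2 * (N : ℝ) + 1) := by
      have hsin (m : ℕ) : ∫ θ in (0 : ℝ)..π / 2, sin (4 * m * θ) = 0 := by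
        rcases eq_or_ne m 0 with rfl | hm
        · simp
        · have : (4 * m : ℝ) ≠ 0 := by positivity
          rw [integral_comp_mul_left _ this, integral_sin,
            show 4 * (m : ℝ) * (π / 2) = m * (2 * π) by ring, cos_nat_mul_two_pi]
          simp
      have hodd : ∫ θ in (0 : ℝ)..π / 2, sin ((4 * N + 2) * θ) = 2 / (4 * N + 2) := by
        have : (4 * N + 2 : ℝ) ≠ 0 := by positivity
        rw [integral_comp_mul_left _ this, integral_sin,
          show (4 * (N : ℝ) + 2) * (π / 2) = N * (2 * π) + π by ring, cos_nat_mul_two_pi_add_pi]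
        simp only [mul_zero, cos_zero, smul_eq_mul]
        field_simp
        ring
      have hsin' : ∫ θ in (0 : ℝ)..π / 2, sin ((4 * N + 4) * θ) = 0 := by
        have := hsin (N + 1)
        push_cast at this
        simpa only [mul_add, mul_one] using this
      rw [intervalIntegral.integral_add, intervalIntegral.integral_add,
        intervalIntegral.integral_const_mul, hodd, hsin, hsin']
      · field_simp; ring
      all_goals exact Continuous.intervalIntegrable (by fun_prop) _ _
    rw [key, Finset.sum_range_succ]
    refine ⟨hint.add (hcont.intervalIntegrable _ _), ?_⟩
    rw [intervalIntegral.integral_add hint (hcont.intervalIntegrable _ _), hval, hI]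

lemma sum_two_div_odd (N : ℕ) :
    ∑ j ∈ Finset.range N, 2 / (2 * (j : ℝ) + 1) = 2 * (harmonic (2 * N) : ℝ) - harmonic N := by
  induction N with
  | zero => simp
  | succ N ih =>
    rw [Finset.sum_range_succ, ih, show 2 * (N + 1) = 2 * N + 1 + 1 by ring, harmonic_succ,
      harmonic_succ, harmonic_succ]
    push_cast
    field_simp
    ring

/-- The odd harmonic sums satisfy `2 ∑_{j < N} 1 / (2 j + 1) - log N → γ + 2 log 2`. -/
lemma tendsto_sum_two_div_odd_sub_log :
    Tendsto (fun N : ℕ ↦ ∑ j ∈ Finset.range N, 2 / (2 * (j : ℝ) + 1) - log N) atTop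
      (𝓝 (eulerMascheroniConstant + 2 * log 2)) := by
  have h₁ := tendsto_harmonic_sub_log
  have h₂ := h₁.comp (tendsto_id.const_mul_atTop' (r := 2) two_pos)
  have h₃ := ((h₂.const_mul 2).sub h₁).add_const (2 * log 2)
  rw [show 2 * eulerMascheroniConstant - eulerMascheroniConstant + 2 * log 2 =
    eulerMascheroniConstant + 2 * log 2 by ring] at h₃
  refine h₃.congr' ?_
  filter_upwards [eventually_ge_atTop 1] with N hN
  have hN' : (N : ℝ) ≠ 0 := by positivity
  simp only [Function.comp, id, sum_two_div_odd, Nat.cast_mul, Nat.cast_ofNat]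
  rw [log_mul two_ne_zero hN']
  ring

lemma sinc_pos_of_mem_Icc {θ : ℝ} (h : θ ∈ Set.Icc 0 (π / 2)) : 0 < sinc θ := by
  rcases h.1.eq_or_lt with rfl | h0
  · simp
  · rw [sinc_of_ne_zero h0.ne']
    exact div_pos (sin_pos_of_pos_of_lt_pi h0 (by linarith [h.2, pi_pos])) h0

/-- `1 / θ - cot θ` is integrable over `(0, π / 2)`, with integral `log (π / 2)`. -/
lemma integral_inv_sub_cot :
    IntervalIntegrable (fun θ ↦ 1 / θ - cos θ / sin θ) volume 0 (π / 2) ∧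
      ∫ θ in (0 : ℝ)..π / 2, (1 / θ - cos θ / sin θ) = log (π / 2) := by
  have hpi : (0 : ℝ) ≤ π / 2 := by positivity
  have hcont : ContinuousOn (fun θ ↦ -log (sinc θ)) (Set.Icc 0 (π / 2)) :=
    (continuous_sinc.continuousOn.log fun θ hθ ↦ (sinc_pos_of_mem_Icc hθ).ne').neg
  have hderiv : ∀ θ ∈ Set.Ioo 0 (π / 2),
      HasDerivAt (fun θ ↦ -log (sinc θ)) (1 / θ - cos θ / sin θ) θ := by
    intro θ hθ
    have hs : 0 < sin θ := sin_pos_of_pos_of_lt_pi hθ.1 (by linarith [hθ.2, pi_pos])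
    have h : HasDerivAt (fun θ ↦ log θ - log (sin θ)) (1 / θ - cos θ / sin θ) θ := by
      rw [one_div]
      exact (hasDerivAt_log hθ.1.ne').sub ((hasDerivAt_sin θ).log hs.ne')
    refine h.congr_of_eventuallyEq ?_
    filter_upwards [isOpen_Ioo.mem_nhds hθ] with t ht
    have hs : 0 < sin t := sin_pos_of_pos_of_lt_pi ht.1 (by linarith [ht.2, pi_pos])
    rw [sinc_of_ne_zero ht.1.ne', log_div hs.ne' ht.1.ne']
    ring
  have hint : IntervalIntegrable (fun θ ↦ 1 / θ - cos θ / sin θ) volume 0 (π / 2) := by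
    rw [intervalIntegrable_iff_integrableOn_Ioc_of_le hpi]
    refine integrableOn_deriv_of_nonneg hcont hderiv fun θ hθ ↦ ?_
    have hs : 0 < sin θ := sin_pos_of_pos_of_lt_pi hθ.1 (by linarith [hθ.2, pi_pos])
    have hc : 0 < cos θ := cos_pos_of_mem_Ioo ⟨by linarith [hθ.1, pi_pos], hθ.2⟩
    have ht := lt_tan hθ.1 hθ.2
    rw [tan_eq_sin_div_cos, lt_div_iff₀ hc] at ht
    rw [sub_nonneg, div_le_div_iff₀ hs hθ.1]
    linarith
  refine ⟨hint, ?_⟩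
  rw [integral_eq_sub_of_hasDerivAt_of_le hpi hcont hderiv hint,
    sinc_of_ne_zero (by positivity), sin_pi_div_two, sinc_zero, one_div, log_inv]
  simp

/-- The Riemann–Lebesgue lemma for cosine integrals over an interval. -/
lemma tendsto_integral_cos_mul {f : ℝ → ℝ} {a b : ℝ} (hab : a ≤ b)
    (hf : IntervalIntegrable f volume a b) :
    Tendsto (fun w : ℝ ↦ ∫ θ in a..b, cos (w * θ) * f θ) atTop (𝓝 0) := by
  let g : ℝ → ℂ := Set.indicator (Set.Ioc a b) fun θ ↦ (f θ : ℂ)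
  have hg : Integrable g := by
    rw [integrable_indicator_iff measurableSet_Ioc]
    exact ((intervalIntegrable_iff_integrableOn_Ioc_of_le hab).mp hf).ofReal
  have h := (Real.tendsto_integral_exp_smul_cocompact g).comp
    ((tendsto_id.atTop_div_const two_pi_pos).mono_right atTop_le_cocompact)
  have hre := (Complex.continuous_re.tendsto 0).comp h
  rw [Complex.zero_re] at hre
  refine hre.congr fun w ↦ ?_
  have hi : Integrable fun v : ℝ ↦ (fourierChar (-(v * (w / (2 * π)))) : Circle) • g v := by
    have := (Real.fourierIntegral_convergent_iff (μ := volume) (f := g) (w / (2 * π))).mpr hg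
    simpa [mul_comm] using this
  have hr := integral_re hi
  simp only [Function.comp, id]
  refine hr.symm.trans ?_
  rw [intervalIntegral.integral_of_le hab, ← MeasureTheory.integral_indicator measurableSet_Ioc]
  refine integral_congr_ae (Eventually.of_forall fun v ↦ ?_)
  by_cases hv : v ∈ Set.Ioc a b
  · have : 2 * π * -(v * (w / (2 * π))) = -(w * v) := by field_simp
    simp only [g, Set.indicator_of_mem hv, Circle.smul_def, Real.fourierChar_apply, this]
    simp [Complex.exp_ofReal_mul_I_re, -Complex.ofReal_neg, -Complex.ofReal_mul]
  · simp [g, hv]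

lemma one_sub_cos_two_pi_mul_div (u : ℝ) :
    (1 - cos (2 * π * u)) / u = 2 * π * (sin (π * u) * sinc (π * u)) := by
  rcases eq_or_ne u 0 with rfl | hu
  · simp
  · rw [sinc_of_ne_zero (by positivity), mul_assoc, cos_two_mul, cos_sq']
    field_simp
    ring

lemma continuous_one_sub_cos_two_pi_mul_div :
    Continuous fun u : ℝ ↦ (1 - cos (2 * π * u)) / u := by
  simp_rw [one_sub_cos_two_pi_mul_div]
  have := continuous_sinc
  fun_prop

lemma intervalIntegrable_log_mul_sin (a b : ℝ) :
    IntervalIntegrable (fun u ↦ log u * sin (2 * π * u)) volume a b :=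
  intervalIntegrable_log'.mul_continuousOn (by fun_prop)

/-- Integration by parts turns the logarithmic sine integral into a cosine integral. -/
lemma integral_log_mul_sin (N : ℕ) :
    ∫ u in (0 : ℝ)..N, log u * sin (2 * π * u) =
      -(1 / (2 * π)) * ∫ θ in (0 : ℝ)..π / 2, (1 - cos (4 * N * θ)) / θ := by
  have hN : (0 : ℝ) ≤ N := N.cast_nonneg
  have hcont : Continuous fun u : ℝ ↦ (1 - cos (2 * π * u)) * log u := by
    have h : (fun u : ℝ ↦ (1 - cos (2 * π * u)) * log u) =
        fun u ↦ (1 - cos (2 * π * u)) / u * (u * log u) := by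
      funext u
      rcases eq_or_ne u 0 with rfl | hu
      · simp
      · field_simp
    rw [h]
    exact continuous_one_sub_cos_two_pi_mul_div.mul continuous_mul_log
  have hi₁ := (intervalIntegrable_log_mul_sin 0 N).const_mul (2 * π)
  have hi₂ := continuous_one_sub_cos_two_pi_mul_div.intervalIntegrable (μ := volume) 0 N
  have hftc := integral_eq_sub_of_hasDerivAt_of_le (a := 0) (b := (N : ℝ)) hN hcont.continuousOn
    (f' := fun u ↦ 2 * π * (log u * sin (2 * π * u)) + (1 - cos (2 * π * u)) / u)
    (fun u hu ↦ by
      have hc : HasDerivAt (fun u : ℝ ↦ 1 - cos (2 * π * u)) (sin (2 * π * u) * (2 * π)) u := by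
        simpa using (((hasDerivAt_id u).const_mul (2 * π)).cos).const_sub 1
      exact (hc.mul (hasDerivAt_log hu.1.ne')).congr_deriv (by ring))
    (hi₁.add hi₂)
  rw [intervalIntegral.integral_add hi₁ hi₂, intervalIntegral.integral_const_mul,
    show 2 * π * (N : ℝ) = N * (2 * π) by ring, cos_nat_mul_two_pi] at hftc
  have hscale : ∫ u in (0 : ℝ)..N, (1 - cos (2 * π * u)) / u =
      ∫ θ in (0 : ℝ)..π / 2, (1 - cos (4 * N * θ)) / θ := by
    rcases N.eq_zero_or_pos with rfl | hpos
    · simp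
    · have hc : 2 * (N : ℝ) / π ≠ 0 := by positivity
      have h := integral_comp_mul_left (a := 0) (b := π / 2)
        (fun u ↦ (1 - cos (2 * π * u)) / u) hc
      rw [mul_zero, show 2 * (N : ℝ) / π * (π / 2) = N by field_simp, smul_eq_mul,
        eq_inv_mul_iff_mul_eq₀ hc, ← intervalIntegral.integral_const_mul] at h
      rw [← h]
      congr 1
      funext θ
      rw [show 2 * π * (2 * (N : ℝ) / π * θ) = 4 * N * θ by field_simp; ring]
      rcases eq_or_ne θ 0 with rfl | hθ
      · simp
      · field_simp
  rw [← hscale]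
  simp at hftc
  field_simp
  linarith

/-- The asymptotic value of the logarithmic sine integral over an integer interval. -/
lemma tendsto_integral_log_mul_sin :
    Tendsto (fun N : ℕ ↦ -log N - 2 * π * ∫ u in (0 : ℝ)..N, log u * sin (2 * π * u)) atTop
      (𝓝 (eulerMascheroniConstant + log (2 * π))) := by
  obtain ⟨hi, hv⟩ := integral_inv_sub_cot
  have hRL := (tendsto_integral_cos_mul (by positivity) hi).comp
    ((tendsto_natCast_atTop_atTop (R := ℝ)).const_mul_atTop (four_pos (α := ℝ)))
  have h := (tendsto_sum_two_div_odd_sub_log.add_const (log (π / 2))).sub hRL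
  have hlim : eulerMascheroniConstant + 2 * log 2 + log (π / 2) - 0 =
      eulerMascheroniConstant + log (2 * π) := by
    rw [log_div pi_ne_zero two_ne_zero, log_mul two_ne_zero pi_ne_zero]
    ring
  rw [hlim] at h
  refine h.congr fun N ↦ ?_
  obtain ⟨hi', hv'⟩ := integral_one_sub_cos_mul_cot N
  have hic : IntervalIntegrable (fun θ ↦ cos (4 * N * θ) * (1 / θ - cos θ / sin θ))
      volume 0 (π / 2) := hi.continuousOn_mul (by fun_prop)
  have hsplit : ∫ θ in (0 : ℝ)..π / 2, (1 - cos (4 * N * θ)) / θ =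
      (∫ θ in (0 : ℝ)..π / 2, (1 - cos (4 * N * θ)) * (cos θ / sin θ)) +
        ((∫ θ in (0 : ℝ)..π / 2, (1 / θ - cos θ / sin θ)) -
          ∫ θ in (0 : ℝ)..π / 2, cos (4 * N * θ) * (1 / θ - cos θ / sin θ)) := by
    rw [← intervalIntegral.integral_sub hi hic, ← intervalIntegral.integral_add hi' (hi.sub hic)]
    congr 1
    funext θ
    ring
  rw [integral_log_mul_sin, hsplit, hv, hv']
  simp only [Function.comp]
  field_simp
  ring

lemma intervalIntegrable_log_Gamma :
    IntervalIntegrable (fun x ↦ log (Gamma x)) volume 0 1 := by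
  have hcont : ContinuousOn (fun x : ℝ ↦ log (Gamma (x + 1))) (Set.uIcc 0 1) := by
    rw [Set.uIcc_of_le zero_le_one]
    intro x hx
    have hx1 : 0 < x + 1 := by linarith [hx.1]
    have hd : ContinuousAt Gamma (x + 1) :=
      (differentiableAt_Gamma fun m ↦ by
        have : (0 : ℝ) ≤ m := m.cast_nonneg
        linarith).continuousAt
    have hc : ContinuousAt (fun x : ℝ ↦ Gamma (x + 1)) x :=
      ContinuousAt.comp (f := fun x : ℝ ↦ x + 1) hd (by fun_prop)
    exact (hc.log (Gamma_pos_of_pos hx1).ne').continuousWithinAt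
  refine (hcont.intervalIntegrable.sub intervalIntegrable_log').congr ?_
  rw [Set.uIoc_of_le zero_le_one]
  intro x hx
  simp only
  rw [Gamma_add_one hx.1.ne', log_mul hx.1.ne' (Gamma_pos_of_pos hx.1).ne']
  ring

lemma logGammaSeq_le_log_Gamma {x : ℝ} (hx : 0 < x) {n : ℕ} (hn : n ≠ 0) :
    BohrMollerup.logGammaSeq x n ≤ log (Gamma x) := by
  have h := BohrMollerup.ge_logGammaSeq convexOn_log_Gamma (fun {y} hy ↦ by
    rw [Function.comp_apply, Gamma_add_one hy.ne', log_mul hy.ne' (Gamma_pos_of_pos hy).ne',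
      add_comm, Function.comp_apply]) hx hn
  simpa using h

lemma log_Gamma_le_logGammaSeq {x : ℝ} (hx : 0 < x) (hx' : x ≤ 1) (n : ℕ) :
    log (Gamma x) ≤ BohrMollerup.logGammaSeq x n + x * (log (n + 1) - log n) := by
  have h := BohrMollerup.le_logGammaSeq convexOn_log_Gamma (fun {y} hy ↦ by
    rw [Function.comp_apply, Gamma_add_one hy.ne', log_mul hy.ne' (Gamma_pos_of_pos hy).ne',
      add_comm, Function.comp_apply]) hx hx' n
  simp only [Function.comp, Gamma_one, log_one] at h
  linarith

lemma integral_sin_two_pi : ∫ x in (0 : ℝ)..1, sin (2 * π * x) = 0 := by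
  rw [integral_comp_mul_left _ two_pi_pos.ne', integral_sin]
  simp

lemma integral_id_mul_sin_two_pi :
    ∫ x in (0 : ℝ)..1, x * sin (2 * π * x) = -(1 / (2 * π)) := by
  have hderiv : ∀ x ∈ Set.uIcc (0 : ℝ) 1,
      HasDerivAt (fun x ↦ -(x * cos (2 * π * x)) / (2 * π) + sin (2 * π * x) / (2 * π) ^ 2)
        (x * sin (2 * π * x)) x := by
    intro x _
    have hl : HasDerivAt (fun x : ℝ ↦ 2 * π * x) (2 * π) x := by
      simpa using (hasDerivAt_id x).const_mul (2 * π)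
    refine ((((hasDerivAt_id x).mul hl.cos).neg.div_const (2 * π)).add
      (hl.sin.div_const ((2 * π) ^ 2))).congr_deriv ?_
    simp only [id]
    field_simp
    ring
  rw [integral_eq_sub_of_hasDerivAt hderiv (Continuous.intervalIntegrable (by fun_prop) _ _)]
  simp
  ring

lemma integral_logGammaSeq_mul_sin (n : ℕ) :
    IntervalIntegrable (fun x ↦ BohrMollerup.logGammaSeq x n * sin (2 * π * x)) volume 0 1 ∧
      ∫ x in (0 : ℝ)..1, BohrMollerup.logGammaSeq x n * sin (2 * π * x) =
        -(log n / (2 * π)) -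
          ∫ u in (0 : ℝ)..(n + 1 : ℕ), log u * sin (2 * π * u) := by
  have hexp : (fun x : ℝ ↦ BohrMollerup.logGammaSeq x n * sin (2 * π * x)) =
      fun x ↦ log n * (x * sin (2 * π * x)) + log n.factorial * sin (2 * π * x) -
        ∑ m ∈ Finset.range (n + 1), log (x + m) * sin (2 * π * x) := by
    funext x
    rw [BohrMollerup.logGammaSeq, ← Finset.sum_mul]
    ring
  have hshift (m : ℕ) (x : ℝ) :
      log (x + m) * sin (2 * π * x) = log (x + m) * sin (2 * π * (x + m)) := by
    rw [show 2 * π * (x + m) = 2 * π * x + m * (2 * π) by ring, sin_add_nat_mul_two_pi]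
  have hi₁ : IntervalIntegrable (fun x : ℝ ↦ log n * (x * sin (2 * π * x))) volume 0 1 :=
    Continuous.intervalIntegrable (by fun_prop) _ _
  have hi₂ : IntervalIntegrable (fun x : ℝ ↦ log n.factorial * sin (2 * π * x)) volume 0 1 :=
    Continuous.intervalIntegrable (by fun_prop) _ _
  have hi₃ (m : ℕ) :
      IntervalIntegrable (fun x : ℝ ↦ log (x + m) * sin (2 * π * x)) volume 0 1 := by
    simp_rw [hshift]
    simpa [add_comm] using (intervalIntegrable_log_mul_sin m (m + 1)).comp_add_right (m : ℝ)
  have hi₄ : IntervalIntegrable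
      (fun x : ℝ ↦ ∑ m ∈ Finset.range (n + 1), log (x + m) * sin (2 * π * x)) volume 0 1 := by
    simpa [Finset.sum_fn] using IntervalIntegrable.sum (Finset.range (n + 1)) fun m _ ↦ hi₃ m
  rw [hexp]
  refine ⟨(hi₁.add hi₂).sub hi₄, ?_⟩
  rw [intervalIntegral.integral_sub (hi₁.add hi₂) hi₄, intervalIntegral.integral_add hi₁ hi₂,
    intervalIntegral.integral_const_mul, intervalIntegral.integral_const_mul,
    integral_sin_two_pi, integral_id_mul_sin_two_pi,
    intervalIntegral.integral_finsetSum fun m _ ↦ hi₃ m]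
  have hsum := sum_integral_adjacent_intervals (a := fun k : ℕ ↦ (k : ℝ)) (n := n + 1)
    fun k _ ↦ intervalIntegrable_log_mul_sin k (k + 1 : ℕ)
  rw [Nat.cast_zero] at hsum
  rw [← hsum]
  have hterm (m : ℕ) : ∫ x in (0 : ℝ)..1, log (x + m) * sin (2 * π * x) =
      ∫ u in (m : ℝ)..(m + 1 : ℕ), log u * sin (2 * π * u) := by
    simp_rw [hshift]
    rw [integral_comp_add_right (fun u ↦ log u * sin (2 * π * u))]
    push_cast
    rw [zero_add, add_comm (1 : ℝ)]
  simp_rw [hterm]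
  ring

/-- The first Fourier sine coefficient of `log Γ` on the unit interval. -/
lemma integral_log_Gamma_mul_sin :
    ∫ x in (0 : ℝ)..1, log (Gamma x) * sin (2 * π * x) =
      (eulerMascheroniConstant + log (2 * π)) / (2 * π) := by
  have hi : IntervalIntegrable (fun x ↦ log (Gamma x) * sin (2 * π * x)) volume 0 1 :=
    intervalIntegrable_log_Gamma.mul_continuousOn (by fun_prop)
  have hgap := tendsto_log_nat_add_one_sub_log
  have hseq : Tendsto
      (fun n : ℕ ↦ ∫ x in (0 : ℝ)..1, BohrMollerup.logGammaSeq x n * sin (2 * π * x)) atTop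
      (𝓝 (∫ x in (0 : ℝ)..1, log (Gamma x) * sin (2 * π * x))) := by
    rw [tendsto_iff_norm_sub_tendsto_zero]
    refine squeeze_zero' (Eventually.of_forall fun _ ↦ norm_nonneg _) ?_ hgap
    filter_upwards [eventually_ne_atTop 0] with n hn
    rw [← intervalIntegral.integral_sub (integral_logGammaSeq_mul_sin n).1 hi]
    have := norm_integral_le_of_norm_le_const (a := 0) (b := 1)
      (C := log ((n : ℝ) + 1) - log n)
      (f := fun x ↦ BohrMollerup.logGammaSeq x n * sin (2 * π * x) -
        log (Gamma x) * sin (2 * π * x)) fun x hx ↦ by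
        rw [Set.uIoc_of_le zero_le_one] at hx
        have h₁ := logGammaSeq_le_log_Gamma hx.1 hn
        have h₂ := log_Gamma_le_logGammaSeq hx.1 hx.2 n
        have h₃ : 0 ≤ log ((n : ℝ) + 1) - log n := by
          rw [sub_nonneg]
          exact log_le_log (by positivity) (by linarith)
        rw [← sub_mul, norm_mul, norm_eq_abs, norm_eq_abs]
        calc _ ≤ (log ((n : ℝ) + 1) - log n) * 1 := by
              gcongr
              · rw [abs_le]
                constructor <;> nlinarith [hx.2]
              · exact abs_sin_le_one _
          _ = _ := mul_one _
    simpa using this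
  have hlim := (((tendsto_integral_log_mul_sin.comp (tendsto_add_atTop_nat 1)).add
    hgap).div_const (2 * π))
  rw [add_zero] at hlim
  refine tendsto_nhds_unique hseq (hlim.congr fun n ↦ ?_)
  rw [(integral_logGammaSeq_mul_sin n).2]
  simp only [Function.comp]
  push_cast
  field_simp
  ring

lemma intervalIntegrable_log_sin_pi_mul :
    IntervalIntegrable (fun x ↦ log (sin (π * x))) volume 0 1 := by
  have h := (intervalIntegrable_log_sin (a := 0) (b := π)).comp_mul_left (c := π)
  simpa [Function.comp_def, pi_ne_zero] using h

lemma integral_log_sin_pi_mul : ∫ x in (0 : ℝ)..1, log (sin (π * x)) = -log 2 := by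
  rw [integral_comp_mul_left (fun x ↦ log (sin x)) pi_ne_zero, mul_zero, mul_one,
    integral_log_sin_zero_pi, smul_eq_mul]
  field_simp

lemma integral_one_sub_mul_sin :
    ∫ x in (0 : ℝ)..1, (1 - x) * sin (2 * π * x) = 1 / (2 * π) := by
  simp_rw [sub_mul, one_mul]
  rw [intervalIntegral.integral_sub, integral_sin_two_pi, integral_id_mul_sin_two_pi]
  · ring
  all_goals exact Continuous.intervalIntegrable (by fun_prop) _ _

lemma integral_one_sub_mul_sin_mul_log_sin :
    ∫ x in (0 : ℝ)..1, (1 - x) * sin (2 * π * x) * log (sin (π * x)) =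
      -(log 2 / (2 * π)) := by
  have hls := intervalIntegrable_log_sin_pi_mul
  let F : ℝ → ℝ := fun x ↦
    ((1 - x) * sin (π * x) / π - cos (π * x) / (2 * π ^ 2)) * (sin (π * x) * log (sin (π * x)))
  have hF : Continuous F := by
    have h := continuous_mul_log.comp (show Continuous fun x : ℝ ↦ sin (π * x) by fun_prop)
    exact Continuous.mul (by fun_prop) h
  have hi₁ : IntervalIntegrable (fun x ↦ (1 - x) * sin (2 * π * x) * log (sin (π * x)))
      volume 0 1 := hls.continuousOn_mul (by fun_prop)
  have hi₂ := hls.const_mul (1 / (2 * π))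
  have hi₃ : IntervalIntegrable (fun x : ℝ ↦ 1 / 2 * ((1 - x) * sin (2 * π * x)))
      volume 0 1 := Continuous.intervalIntegrable (by fun_prop) _ _
  have hi₄ : IntervalIntegrable (fun x : ℝ ↦ 1 / (4 * π) * (1 + cos (2 * π * x)))
      volume 0 1 := Continuous.intervalIntegrable (by fun_prop) _ _
  have hftc := integral_eq_sub_of_hasDerivAt_of_le (a := 0) (b := 1) zero_le_one hF.continuousOn
    (f' := fun x ↦ ((1 - x) * sin (2 * π * x) * log (sin (π * x)) -
      1 / (2 * π) * log (sin (π * x))) + (1 / 2 * ((1 - x) * sin (2 * π * x)) -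
        1 / (4 * π) * (1 + cos (2 * π * x))))
    (fun x hx ↦ by
      have hs : 0 < sin (π * x) := sin_pos_of_pos_of_lt_pi (mul_pos pi_pos hx.1)
        (by nlinarith [hx.2, pi_pos])
      have hl : HasDerivAt (fun x : ℝ ↦ π * x) π x := by
        simpa using (hasDerivAt_id x).const_mul π
      have h1 : HasDerivAt (fun x : ℝ ↦ 1 - x) (-1) x := (hasDerivAt_id x).const_sub 1
      refine ((((h1.mul hl.sin).div_const π).sub (hl.cos.div_const (2 * π ^ 2))).mul
        (hl.sin.mul (hl.sin.log hs.ne'))).congr_deriv ?_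
      have hc := sin_sq_add_cos_sq (π * x)
      rw [show 2 * π * x = 2 * (π * x) by ring, sin_two_mul, cos_two_mul]
      simp only [Pi.mul_apply, Pi.sub_apply]
      field_simp
      generalize log (sin (π * x)) = L at *
      generalize sin (π * x) = s at *
      generalize cos (π * x) = c at *
      have hs2 : s ^ 2 = 1 - c ^ 2 := by linarith
      ring_nf
      simp only [hs2]
      ring)
    ((hi₁.sub hi₂).add (hi₃.sub hi₄))
  have hcos : ∫ x in (0 : ℝ)..1, (1 + cos (2 * π * x)) = 1 := by
    rw [intervalIntegral.integral_add (by simp) (Continuous.intervalIntegrable (by fun_prop) _ _),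
      integral_comp_mul_left _ two_pi_pos.ne', integral_cos]
    simp
  rw [intervalIntegral.integral_add (hi₁.sub hi₂) (hi₃.sub hi₄),
    intervalIntegral.integral_sub hi₁ hi₂, intervalIntegral.integral_sub hi₃ hi₄,
    intervalIntegral.integral_const_mul, intervalIntegral.integral_const_mul,
    intervalIntegral.integral_const_mul, integral_log_sin_pi_mul, integral_one_sub_mul_sin,
    hcos] at hftc
  have hF0 : F 1 - F 0 = 0 := by simp [F]
  rw [hF0] at hftc
  generalize ∫ x in (0 : ℝ)..1, (1 - x) * sin (2 * π * x) * log (sin (π * x)) = J at hftc ⊢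
  field_simp at hftc ⊢
  linarith

/-- `∫₀¹ x·log Γ(x)·sin(2πx) dx = γ/(4π)`, where `γ` is the Euler–Mascheroni constant. -/
theorem integral_x_log_Gamma_sin :
    ∫ x in (0:ℝ)..1, x * Real.log (Real.Gamma x) * Real.sin (2 * π * x) =
      Real.eulerMascheroniConstant / (4 * π) := by
  have hL := intervalIntegrable_log_Gamma
  have hi : IntervalIntegrable (fun x ↦ x * log (Gamma x) * sin (2 * π * x)) volume 0 1 :=
    (hL.continuousOn_mul (by fun_prop)).mul_continuousOn (by fun_prop)
  have hi₁ : IntervalIntegrable (fun x ↦ log (Gamma x) * sin (2 * π * x)) volume 0 1 :=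
    hL.mul_continuousOn (by fun_prop)
  have hi₂ : IntervalIntegrable (fun x : ℝ ↦ log π * ((1 - x) * sin (2 * π * x))) volume 0 1 :=
    Continuous.intervalIntegrable (by fun_prop) _ _
  have hi₃ : IntervalIntegrable (fun x ↦ (1 - x) * sin (2 * π * x) * log (sin (π * x)))
      volume 0 1 := intervalIntegrable_log_sin_pi_mul.continuousOn_mul (by fun_prop)
  have hreflect : ∫ x in (0 : ℝ)..1, x * log (Gamma x) * sin (2 * π * x) =
      ∫ x in (0 : ℝ)..1, (log (Gamma x) * sin (2 * π * x) -
        log π * ((1 - x) * sin (2 * π * x)) +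
          (1 - x) * sin (2 * π * x) * log (sin (π * x)) -
            x * log (Gamma x) * sin (2 * π * x)) := by
    have h := integral_comp_sub_left (a := 0) (b := 1)
      (fun x ↦ x * log (Gamma x) * sin (2 * π * x)) 1
    rw [sub_self, sub_zero] at h
    rw [← h]
    refine integral_congr_Ioo_of_le zero_le_one fun x hx ↦ ?_
    have hs : 0 < sin (π * x) := sin_pos_of_pos_of_lt_pi (mul_pos pi_pos hx.1)
      (by nlinarith [hx.2, pi_pos])
    have hlog := congrArg log (Gamma_mul_Gamma_one_sub x)
    rw [log_mul (Gamma_pos_of_pos hx.1).ne' (Gamma_pos_of_pos (sub_pos.mpr hx.2)).ne',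
      log_div pi_ne_zero hs.ne', ← eq_sub_iff_add_eq'] at hlog
    rw [hlog, show 2 * π * (1 - x) = 2 * π - 2 * π * x by ring, sin_two_pi_sub]
    ring
  rw [intervalIntegral.integral_sub ((hi₁.sub hi₂).add hi₃) hi,
    intervalIntegral.integral_add (hi₁.sub hi₂) hi₃, intervalIntegral.integral_sub hi₁ hi₂,
    intervalIntegral.integral_const_mul, integral_log_Gamma_mul_sin, integral_one_sub_mul_sin,
    integral_one_sub_mul_sin_mul_log_sin, log_mul two_ne_zero pi_ne_zero] at hreflect
  generalize ∫ x in (0 : ℝ)..1, x * log (Gamma x) * sin (2 * π * x) = I at hreflect ⊢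
  field_simp at hreflect ⊢
  linarith
end

section
/- The series ∑_{n=1}^∞ ζ(2n+1)/((n+1)(2n+5)) converges and equals (1/540)·(1440·log A − 1440·ζ′(−3) − 108·γ − 157), where A = e^{1/12 − ζ′(−1)} is the Glaisher–Kinkelin constant and γ is the Euler–Mascheroni constant. -/
open Real

open Filter Topology

/-- The Euler–Maclaurin approximation of `∑_{m ≥ x} m ^ (-s)`, through the term with the
Bernoulli number `B₄`. -/
noncomputable def zetaTail (x : ℝ) (s : ℂ) : ℂ :=
  (x : ℂ) ^ (1 - s) / (s - 1) + (x : ℂ) ^ (-s) / 2 + s * (x : ℂ) ^ (-s - 1) / 12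
    - s * (s + 1) * (s + 2) * (x : ℂ) ^ (-s - 3) / 720

lemma norm_cpow_add_zetaTail_sub_le {a : ℝ} (ha : 0 < a) {s : ℂ} (hs : 0 ≤ s.re + 5) (hs1 : s ≠ 1) :
    ‖(a : ℂ) ^ (-s) + (zetaTail (a + 1) s - zetaTail a s)‖
      ≤ ‖s * (s + 1) * (s + 2) * (s + 3) * (s + 4)‖ * a ^ (-(s.re + 5)) := by
  have hs1' : s - 1 ≠ 0 := sub_ne_zero.2 hs1
  let φ : ℂ → ℂ := fun z => z ^ (1 - s) / (s - 1) + (z - a - 1 / 2) * z ^ (-s)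
    + s * ((z - a) ^ 2 / 2 - (z - a) / 2 + 1 / 12) * z ^ (-s - 1)
    + s * (s + 1) * ((z - a) ^ 3 / 6 - (z - a) ^ 2 / 4 + (z - a) / 12) * z ^ (-s - 2)
    + s * (s + 1) * (s + 2) * ((z - a) ^ 4 - 2 * (z - a) ^ 3 + (z - a) ^ 2 - 1 / 30) / 24
      * z ^ (-s - 3)
    + s * (s + 1) * (s + 2) * (s + 3)
      * ((z - a) ^ 5 - 5 / 2 * (z - a) ^ 4 + 5 / 3 * (z - a) ^ 3 - (z - a) / 6) / 120
      * z ^ (-s - 4)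
  let ψ : ℂ → ℂ := fun t => (t ^ 5 - 5 / 2 * t ^ 4 + 5 / 3 * t ^ 3 - t / 6) / 120
  have hφ : ∀ x ∈ Set.Icc a (a + 1), HasDerivAt (fun x : ℝ => φ x)
      (-(s * (s + 1) * (s + 2) * (s + 3) * (s + 4)) * ψ ((x - a : ℝ) : ℂ)
        * (x : ℂ) ^ (-s - 5)) x := by
    intro x hx
    have hx0 : 0 < x := ha.trans_le hx.1
    have hxc : (x : ℂ) ≠ 0 := by exact_mod_cast hx0.ne'
    have hsl : (x : ℂ) ∈ Complex.slitPlane := by simp [hx0]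
    have hpow : ∀ c : ℂ, HasDerivAt (fun z : ℂ => z ^ c) (c * (x : ℂ) ^ (c - 1)) (x : ℂ) := by
      intro c
      simpa using (hasDerivAt_id (x : ℂ)).cpow_const (c := c) hsl
    have ht : HasDerivAt (fun z : ℂ => z - a) 1 (x : ℂ) := (hasDerivAt_id _).sub_const _
    have key : HasDerivAt φ _ (x : ℂ) :=
      ((((((hpow (1 - s)).div_const (s - 1)).add ((ht.sub_const (1 / 2)).mul (hpow (-s)))).add
        ((((((ht.pow 2).div_const 2).sub (ht.div_const 2)).add_const (1 / 12)).const_mul s).mul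
          (hpow (-s - 1)))).add
        ((((((ht.pow 3).div_const 6).sub ((ht.pow 2).div_const 4)).add
          (ht.div_const 12)).const_mul (s * (s + 1))).mul (hpow (-s - 2)))).add
        ((((((((ht.pow 4).sub ((ht.pow 3).const_mul 2)).add (ht.pow 2)).sub_const
          (1 / 30)).const_mul (s * (s + 1) * (s + 2))).div_const 24)).mul (hpow (-s - 3)))).add
        ((((((((ht.pow 5).sub ((ht.pow 4).const_mul (5 / 2))).add
          ((ht.pow 3).const_mul (5 / 3))).sub (ht.div_const 6)).const_mul
          (s * (s + 1) * (s + 2) * (s + 3))).div_const 120)).mul (hpow (-s - 4)))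
    refine (key.comp_ofReal).congr_deriv ?_
    have hw : ∀ (k : ℕ) (c : ℂ), c = -s - 5 + k →
        (x : ℂ) ^ c = (x : ℂ) ^ (-s - 5) * (x : ℂ) ^ k := by
      rintro k c rfl
      rw [Complex.cpow_add _ _ hxc, Complex.cpow_natCast]
    simp only [ψ, Pi.add_apply, Pi.sub_apply, Pi.pow_apply]
    rw [hw 5 (1 - s - 1) (by push_cast; ring), hw 5 (-s) (by push_cast; ring),
      hw 4 (-s - 1) (by push_cast; ring), hw 3 (-s - 1 - 1) (by push_cast; ring),
      hw 3 (-s - 2) (by push_cast; ring), hw 2 (-s - 2 - 1) (by push_cast; ring),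
      hw 2 (-s - 3) (by push_cast; ring), hw 1 (-s - 3 - 1) (by push_cast; ring),
      hw 1 (-s - 4) (by push_cast; ring), hw 0 (-s - 4 - 1) (by push_cast; ring)]
    generalize (x : ℂ) ^ (-s - 5) = w
    push_cast
    field_simp
    ring
  have hbound : ∀ x ∈ Set.Icc a (a + 1),
      ‖-(s * (s + 1) * (s + 2) * (s + 3) * (s + 4)) * ψ ((x - a : ℝ) : ℂ) * (x : ℂ) ^ (-s - 5)‖
        ≤ ‖s * (s + 1) * (s + 2) * (s + 3) * (s + 4)‖ * a ^ (-(s.re + 5)) := by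
    intro x hx
    have hx0 : 0 < x := ha.trans_le hx.1
    have hψ : ‖ψ ((x - a : ℝ) : ℂ)‖ ≤ 1 := by
      set t := x - a with htdef
      have h0 : 0 ≤ t := by linarith [hx.1]
      have h1 : t ≤ 1 := by linarith [hx.2]
      have : ψ (t : ℂ) = (((t ^ 5 - 5 / 2 * t ^ 4 + 5 / 3 * t ^ 3 - t / 6) / 120 : ℝ) : ℂ) := by
        simp only [ψ]; push_cast; ring
      rw [this, Complex.norm_real, Real.norm_eq_abs, abs_le]
      have h5 := pow_le_one₀ h0 h1 (n := 5)
      have h4 := pow_le_one₀ h0 h1 (n := 4)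
      have h3 := pow_le_one₀ h0 h1 (n := 3)
      have := pow_nonneg h0 5
      have := pow_nonneg h0 4
      have := pow_nonneg h0 3
      constructor <;> linarith
    have hp : ‖(x : ℂ) ^ (-s - 5)‖ ≤ a ^ (-(s.re + 5)) := by
      rw [Complex.norm_cpow_eq_rpow_re_of_pos hx0]
      have : (-s - 5 : ℂ).re = -(s.re + 5) := by simp; ring
      rw [this]
      exact Real.rpow_le_rpow_of_nonpos ha hx.1 (by linarith)
    rw [norm_mul, norm_mul, norm_neg]
    calc _ ≤ ‖s * (s + 1) * (s + 2) * (s + 3) * (s + 4)‖ * 1 * a ^ (-(s.re + 5)) := by gcongr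
      _ = _ := by ring
  have hmvt := Convex.norm_image_sub_le_of_norm_hasDerivWithin_le
    (fun x hx => (hφ x hx).hasDerivWithinAt) hbound (convex_Icc a (a + 1))
    (Set.left_mem_Icc.2 (by linarith)) (Set.right_mem_Icc.2 (by linarith))
  have heq : φ ((a + 1 : ℝ) : ℂ) - φ (a : ℂ)
      = (a : ℂ) ^ (-s) + (zetaTail (a + 1) s - zetaTail a s) := by
    simp only [φ, zetaTail]
    push_cast
    ring
  rw [heq] at hmvt
  simpa using hmvt

lemma sum_cpow_add_zetaTail_sub (s : ℂ) (N : ℕ) :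
    ∑ m ∈ Finset.range N, (((m + 1 : ℝ) : ℂ) ^ (-s)
      + (zetaTail (m + 1 + 1) s - zetaTail (m + 1) s))
      = ∑ m ∈ Finset.range N, ((m + 1 : ℝ) : ℂ) ^ (-s) + zetaTail (N + 1) s - zetaTail 1 s := by
  have h := Finset.sum_range_sub (fun m : ℕ => zetaTail (m + 1) s) N
  simp only [Nat.cast_add, Nat.cast_one, Nat.cast_zero, zero_add] at h
  rw [Finset.sum_add_distrib, h]
  ring

lemma tendsto_zetaTail_zero {s : ℂ} (hs : 1 < s.re) :
    Tendsto (fun N : ℕ => zetaTail (N + 1) s) atTop (𝓝 0) := by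
  have hp : ∀ c : ℂ, c.re < 0 → Tendsto (fun N : ℕ => ((N + 1 : ℝ) : ℂ) ^ c) atTop (𝓝 0) := by
    intro c hc
    rw [tendsto_zero_iff_norm_tendsto_zero]
    have h1 : Tendsto (fun N : ℕ => ((N : ℝ) + 1)) atTop atTop :=
      tendsto_atTop_add_const_right _ _ tendsto_natCast_atTop_atTop
    have h2 := (tendsto_rpow_neg_atTop (y := -c.re) (by linarith)).comp h1
    refine h2.congr fun N => ?_
    rw [Complex.norm_cpow_eq_rpow_re_of_pos (by positivity)]
    simp
  have h := ((((hp (1 - s) (by simp; linarith)).div_const (s - 1)).add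
    ((hp (-s) (by simp; linarith)).div_const 2)).add
    (((hp (-s - 1) (by simp; linarith)).const_mul s).div_const 12)).sub
    (((hp (-s - 3) (by simp; linarith)).const_mul (s * (s + 1) * (s + 2))).div_const 720)
  simpa [zetaTail] using h

/-- A convex open set avoiding `1`, containing `-1` and `-3` and meeting `1 < re s`. -/
def zetaRegion : Set ℂ := Metric.ball 0 (39 / 10) ∩ {s : ℂ | s.re - s.im < 1}

lemma isOpen_zetaRegion : IsOpen zetaRegion :=
  Metric.isOpen_ball.inter
    (isOpen_lt (Complex.continuous_re.sub Complex.continuous_im) continuous_const)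

lemma convex_zetaRegion : Convex ℝ zetaRegion :=
  (convex_ball _ _).inter (convex_halfSpace_lt (Complex.reLm - Complex.imLm).isLinear 1)

lemma ne_one_of_mem_zetaRegion {s : ℂ} (hs : s ∈ zetaRegion) : s ≠ 1 := by
  rintro rfl
  have := hs.2
  simp at this

lemma norm_zeta_term_le {s : ℂ} (hs : s ∈ zetaRegion) (m : ℕ) :
    ‖((m + 1 : ℝ) : ℂ) ^ (-s) + (zetaTail (m + 1 + 1) s - zetaTail (m + 1) s)‖
      ≤ 8 ^ 5 * (1 / |(m : ℝ) + 1| ^ (11 / 10 : ℝ)) := by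
  have hn : ‖s‖ < 39 / 10 := by simpa using hs.1
  have hre : -(39 / 10) < s.re := by
    have := (abs_le.1 (Complex.abs_re_le_norm s)).1
    linarith
  refine (norm_cpow_add_zetaTail_sub_le (by positivity) (by linarith)
    (ne_one_of_mem_zetaRegion hs)).trans ?_
  have hk : ∀ k : ℂ, ‖k‖ ≤ 4 → ‖s + k‖ ≤ 8 := fun k hk => by
    linarith [norm_add_le s k]
  gcongr
  · rw [norm_mul, norm_mul, norm_mul, norm_mul]
    calc _ ≤ (8 : ℝ) * 8 * 8 * 8 * 8 := by
          gcongr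
          · linarith
          all_goals exact hk _ (by norm_num)
      _ = _ := by norm_num
  · rw [one_div, abs_of_pos (by positivity), ← Real.rpow_neg (by positivity)]
    exact Real.rpow_le_rpow_of_exponent_le (by linarith [m.cast_nonneg (α := ℝ)]) (by linarith)

lemma summable_zetaRegion_bound :
    Summable fun m : ℕ => (8 : ℝ) ^ 5 * (1 / |(m : ℝ) + 1| ^ (11 / 10 : ℝ)) :=
  ((Real.summable_one_div_nat_add_rpow 1 (11 / 10)).2 (by norm_num)).mul_left _

lemma differentiableAt_zetaTail {x : ℝ} (hx : 0 < x) {s : ℂ} (hs : s ≠ 1) :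
    DifferentiableAt ℂ (zetaTail x) s := by
  have hxc : (x : ℂ) ≠ 0 := by exact_mod_cast hx.ne'
  have hs' : s - 1 ≠ 0 := sub_ne_zero.2 hs
  have hp : ∀ f : ℂ → ℂ, DifferentiableAt ℂ f s → DifferentiableAt ℂ (fun s => (x : ℂ) ^ f s) s :=
    fun f hf => hf.const_cpow (Or.inl hxc)
  have h1 := hp (fun s => 1 - s) (by fun_prop)
  have h2 := hp (fun s => -s) (by fun_prop)
  have h3 := hp (fun s => -s - 1) (by fun_prop)
  have h4 := hp (fun s => -s - 3) (by fun_prop)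
  unfold zetaTail
  fun_prop (disch := assumption)

lemma differentiableOn_zeta_term (m : ℕ) :
    DifferentiableOn ℂ (fun s => ((m + 1 : ℝ) : ℂ) ^ (-s)
      + (zetaTail (m + 1 + 1) s - zetaTail (m + 1) s)) zetaRegion := by
  intro s hs
  have h1 := ne_one_of_mem_zetaRegion hs
  have hm : ((m + 1 : ℝ) : ℂ) ≠ 0 := by exact_mod_cast (by positivity : (m + 1 : ℝ) ≠ 0)
  exact ((differentiableAt_id.neg.const_cpow (Or.inl hm)).add
    ((differentiableAt_zetaTail (by positivity) h1).sub
      (differentiableAt_zetaTail (by positivity) h1))).differentiableWithinAt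

lemma riemannZeta_eq_zetaTail_add_tsum : Set.EqOn riemannZeta (fun s => zetaTail 1 s
    + ∑' m : ℕ, (((m + 1 : ℝ) : ℂ) ^ (-s) + (zetaTail (m + 1 + 1) s - zetaTail (m + 1) s)))
    zetaRegion := by
  have hdiff := Complex.differentiableOn_tsum_of_summable_norm summable_zetaRegion_bound
    differentiableOn_zeta_term isOpen_zetaRegion (fun m s hs => norm_zeta_term_le hs m)
  have hz : (2 + 2 * Complex.I) ∈ zetaRegion := by
    refine ⟨?_, by simp⟩
    rw [mem_ball_zero_iff, Complex.norm_def, Complex.normSq_apply]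
    simp only [Complex.add_re, Complex.add_im, Complex.mul_re, Complex.mul_im, Complex.re_ofNat,
      Complex.im_ofNat, Complex.I_re, Complex.I_im]
    rw [Real.sqrt_lt' (by norm_num)]
    norm_num
  refine AnalyticOnNhd.eqOn_of_preconnected_of_eventuallyEq
    (DifferentiableOn.analyticOnNhd (fun s hs => (differentiableAt_riemannZeta
      (ne_one_of_mem_zetaRegion hs)).differentiableWithinAt) isOpen_zetaRegion)
    (DifferentiableOn.analyticOnNhd (DifferentiableOn.add (fun s hs => (differentiableAt_zetaTail
      one_pos (ne_one_of_mem_zetaRegion hs)).differentiableWithinAt) hdiff) isOpen_zetaRegion)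
    convex_zetaRegion.isPreconnected hz ?_
  have hre : ∀ᶠ s : ℂ in 𝓝 (2 + 2 * Complex.I), 1 < s.re :=
    (isOpen_lt continuous_const Complex.continuous_re).mem_nhds (by simp)
  filter_upwards [hre, isOpen_zetaRegion.mem_nhds hz] with s hs hsU
  have hsum : Summable fun m : ℕ => ((m + 1 : ℝ) : ℂ) ^ (-s) := by
    have := (summable_nat_add_iff 1).2 (Complex.summable_one_div_nat_cpow.2 hs)
    refine this.congr fun m => ?_
    rw [Complex.cpow_neg, one_div]
    push_cast
    rfl
  have hzeta : riemannZeta s = ∑' m : ℕ, ((m + 1 : ℝ) : ℂ) ^ (-s) := by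
    rw [zeta_eq_tsum_one_div_nat_add_one_cpow hs]
    refine tsum_congr fun m => ?_
    rw [Complex.cpow_neg, one_div]
    push_cast
    rfl
  have hlim := (Summable.of_norm_bounded summable_zetaRegion_bound
    (norm_zeta_term_le hsU)).hasSum.tendsto_sum_nat
  have hlim2 := (hsum.hasSum.tendsto_sum_nat.add (tendsto_zetaTail_zero hs)).sub
    (tendsto_const_nhds (x := zetaTail 1 s))
  have := tendsto_nhds_unique hlim
    (hlim2.congr fun N => (sum_cpow_add_zetaTail_sub s N).symm)
  rw [this, hzeta]
  ring

/-- The derivative of `zetaTail x`. -/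
lemma hasDerivAt_zetaTail {x : ℝ} (hx : 0 < x) {s : ℂ} (hs : s ≠ 1) :
    HasDerivAt (zetaTail x)
      (-(x : ℂ) ^ (1 - s) * (Real.log x / (s - 1) + 1 / (s - 1) ^ 2)
        - Real.log x * (x : ℂ) ^ (-s) / 2
        + (1 - s * Real.log x) * (x : ℂ) ^ (-s - 1) / 12
        - (3 * s ^ 2 + 6 * s + 2 - s * (s + 1) * (s + 2) * Real.log x)
          * (x : ℂ) ^ (-s - 3) / 720) s := by
  have hxc : (x : ℂ) ≠ 0 := by exact_mod_cast hx.ne'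
  have hs' : s - 1 ≠ 0 := sub_ne_zero.2 hs
  have hi := hasDerivAt_id s
  have hp : ∀ {f : ℂ → ℂ}, HasDerivAt f (-1) s →
      HasDerivAt (fun s => (x : ℂ) ^ f s) ((x : ℂ) ^ f s * Real.log x * (-1)) s := by
    intro f hf
    simpa [Complex.ofReal_log hx.le] using hf.const_cpow (c := (x : ℂ)) (Or.inl hxc)
  have key := ((((hp (hi.const_sub 1)).div (hi.sub_const 1) hs').add
    ((hp hi.neg).div_const 2)).add ((hi.mul (hp (hi.neg.sub_const 1))).div_const 12)).sub
    ((((hi.mul (hi.add_const 1)).mul (hi.add_const 2)).mul (hp (hi.neg.sub_const 3))).div_const 720)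
  refine (key.congr_deriv ?_).congr_of_eventuallyEq (Eventually.of_forall fun s => ?_)
  · simp only [id, Pi.mul_apply, Pi.neg_apply]
    field_simp
    ring
  · simp [zetaTail]

lemma tendsto_deriv_riemannZeta {s : ℂ} (hs : s ∈ zetaRegion) :
    Tendsto (fun N : ℕ => -∑ m ∈ Finset.range N, ((m + 1 : ℝ) : ℂ) ^ (-s) * (Real.log (m + 1) : ℂ)
      + deriv (zetaTail (N + 1)) s) atTop (𝓝 (deriv riemannZeta s)) := by
  have h1 := ne_one_of_mem_zetaRegion hs
  have hderiv : deriv riemannZeta s = deriv (zetaTail 1) s + deriv (fun s => ∑' m : ℕ,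
      (((m + 1 : ℝ) : ℂ) ^ (-s) + (zetaTail (m + 1 + 1) s - zetaTail (m + 1) s))) s := by
    rw [(riemannZeta_eq_zetaTail_add_tsum.eventuallyEq_of_mem
      (isOpen_zetaRegion.mem_nhds hs)).deriv_eq]
    exact deriv_add (differentiableAt_zetaTail one_pos h1)
      ((Complex.differentiableOn_tsum_of_summable_norm summable_zetaRegion_bound
        differentiableOn_zeta_term isOpen_zetaRegion
        (fun m s hs => norm_zeta_term_le hs m)).differentiableAt
        (isOpen_zetaRegion.mem_nhds hs))
  have hsum := (Complex.hasSum_deriv_of_summable_norm summable_zetaRegion_bound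
    differentiableOn_zeta_term isOpen_zetaRegion
    (fun m s hs => norm_zeta_term_le hs m) hs).tendsto_sum_nat
  rw [hderiv]
  refine (hsum.const_add (deriv (zetaTail 1) s)).congr fun N => ?_
  have hterm : ∀ m : ℕ, deriv (fun s => ((m + 1 : ℝ) : ℂ) ^ (-s)
      + (zetaTail (m + 1 + 1) s - zetaTail (m + 1) s)) s
      = -(((m + 1 : ℝ) : ℂ) ^ (-s) * (Real.log (m + 1) : ℂ))
        + (deriv (zetaTail (m + 1 + 1)) s - deriv (zetaTail (m + 1)) s) := by
    intro m
    have hm : (0 : ℝ) < m + 1 := by positivity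
    have hmc : ((m + 1 : ℝ) : ℂ) ≠ 0 := by exact_mod_cast hm.ne'
    have hp := (hasDerivAt_id s).neg.const_cpow (c := ((m + 1 : ℝ) : ℂ)) (Or.inl hmc)
    refine HasDerivAt.deriv (((hp.add
      ((differentiableAt_zetaTail (by positivity) h1).hasDerivAt.sub
        (differentiableAt_zetaTail hm h1).hasDerivAt))).congr_deriv ?_)
    simp only [Complex.ofReal_log hm.le, id, Pi.neg_apply]
    ring
  have h := Finset.sum_range_sub (fun m : ℕ => deriv (zetaTail (m + 1)) s) N
  simp only [Nat.cast_add, Nat.cast_one, Nat.cast_zero, zero_add] at h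
  rw [Finset.sum_congr rfl fun m _ => hterm m, Finset.sum_add_distrib, h, Finset.sum_neg_distrib]
  ring

lemma tendsto_deriv_riemannZeta_neg_one :
    Tendsto (fun N : ℕ => -∑ m ∈ Finset.range N, ((m : ℝ) + 1) * Real.log (m + 1)
      + (((N : ℝ) + 1) ^ 2 * (Real.log (N + 1) / 2 - 1 / 4) - (N + 1) * Real.log (N + 1) / 2
        + (1 + Real.log (N + 1)) / 12 + ((N : ℝ) + 1)⁻¹ ^ 2 / 720))
      atTop (𝓝 (deriv riemannZeta (-1)).re) := by
  have hs : (-1 : ℂ) ∈ zetaRegion := ⟨by simp; norm_num, by simp⟩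
  refine ((Complex.continuous_re.tendsto _).comp (tendsto_deriv_riemannZeta hs)).congr fun N => ?_
  have hN : (0 : ℝ) < N + 1 := by positivity
  refine (congrArg Complex.re ?_).trans (Complex.ofReal_re _)
  dsimp only
  rw [(hasDerivAt_zetaTail hN (ne_one_of_mem_zetaRegion hs)).deriv,
    show (1 - -1 : ℂ) = (2 : ℕ) by norm_num, show (-(-1) - 1 : ℂ) = (0 : ℕ) by norm_num,
    show (-(-1) - 3 : ℂ) = -(2 : ℕ) by norm_num, neg_neg, Complex.cpow_neg]
  simp only [Complex.cpow_natCast, Complex.cpow_one]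
  push_cast
  field_simp
  ring

lemma tendsto_deriv_riemannZeta_neg_three :
    Tendsto (fun N : ℕ => -∑ m ∈ Finset.range N, ((m : ℝ) + 1) ^ 3 * Real.log (m + 1)
      + (((N : ℝ) + 1) ^ 4 * (Real.log (N + 1) / 4 - 1 / 16) - (N + 1) ^ 3 * Real.log (N + 1) / 2
        + (1 + 3 * Real.log (N + 1)) * (N + 1) ^ 2 / 12 - (11 + 6 * Real.log (N + 1)) / 720))
      atTop (𝓝 (deriv riemannZeta (-3)).re) := by
  have hs : (-3 : ℂ) ∈ zetaRegion := ⟨by simp; norm_num, by simp; norm_num⟩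
  refine ((Complex.continuous_re.tendsto _).comp (tendsto_deriv_riemannZeta hs)).congr fun N => ?_
  have hN : (0 : ℝ) < N + 1 := by positivity
  refine (congrArg Complex.re ?_).trans (Complex.ofReal_re _)
  dsimp only
  rw [(hasDerivAt_zetaTail hN (ne_one_of_mem_zetaRegion hs)).deriv,
    show (1 - -3 : ℂ) = (4 : ℕ) by norm_num, show (-(-3) - 1 : ℂ) = (2 : ℕ) by norm_num,
    show (-(-3) - 3 : ℂ) = (0 : ℕ) by norm_num, show (-(-3) : ℂ) = (3 : ℕ) by norm_num]
  simp only [Complex.cpow_natCast]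
  push_cast
  ring

lemma sum_one_div_mul_eq_harmonic (N : ℕ) :
    ∑ n ∈ Finset.range N, 1 / (((n : ℝ) + 1 + 1) * (2 * ((n : ℝ) + 1) + 5))
      = 2 / 3 * ((harmonic (N + 1) : ℝ) / 2 + (harmonic (N + 3) : ℝ) / 2
        - (harmonic (2 * N + 6) : ℝ) + 31 / 30) := by
  induction N with
  | zero => norm_num [harmonic, Finset.sum_range_succ]
  | succ N ih =>
    rw [Finset.sum_range_succ, ih, show 2 * (N + 1) + 6 = 2 * N + 6 + 1 + 1 by ring,
      show N + 1 + 3 = N + 3 + 1 by ring, harmonic_succ (N + 1), harmonic_succ (N + 3),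
      harmonic_succ (2 * N + 6 + 1), harmonic_succ (2 * N + 6)]
    push_cast
    field_simp
    ring

lemma hasSum_one_div_mul :
    HasSum (fun n : ℕ => 1 / (((n : ℝ) + 1 + 1) * (2 * ((n : ℝ) + 1) + 5)))
      ((31 / 15 - 2 * Real.log 2) / 3) := by
  rw [hasSum_iff_tendsto_nat_of_nonneg (fun n => by positivity)]
  simp_rw [sum_one_div_mul_eq_harmonic]
  have h1 := Real.tendsto_harmonic_sub_log.comp (tendsto_add_atTop_nat 1)
  have h3 := Real.tendsto_harmonic_sub_log.comp (tendsto_add_atTop_nat 3)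
  have h6 := Real.tendsto_harmonic_sub_log.comp
    (tendsto_atTop_mono (fun N : ℕ => (by omega : N ≤ 2 * N + 6)) tendsto_id)
  have hlog : Tendsto (fun N : ℕ => Real.log ((N : ℝ) + 1) - Real.log ((N : ℝ) + 3))
      atTop (𝓝 0) := by
    have hN : Tendsto (fun N : ℕ => (N : ℝ) + 3) atTop atTop :=
      tendsto_atTop_add_const_right _ _ tendsto_natCast_atTop_atTop
    have hr : Tendsto (fun N : ℕ => 1 - 2 * ((N : ℝ) + 3)⁻¹) atTop (𝓝 1) := by
      simpa using (((tendsto_inv_atTop_zero.comp hN).const_mul 2).const_sub 1)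
    have := hr.log one_ne_zero
    rw [Real.log_one] at this
    refine this.congr fun N => ?_
    rw [← Real.log_div (by positivity) (by positivity)]
    congr 1
    field_simp
    ring
  have h := (((((h1.div_const 2).add (h3.div_const 2)).sub h6).add (hlog.div_const 2)).add_const
    (31 / 30 - Real.log 2)).const_mul (2 / 3)
  convert h using 2 with N
  · simp only [Function.comp_apply]
    have : Real.log ((2 * N + 6 : ℕ) : ℝ) = Real.log 2 + Real.log ((N : ℝ) + 3) := by
      rw [← Real.log_mul (by norm_num) (by positivity)]
      push_cast
      ring_nf
    rw [this]
    push_cast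
    ring
  · ring

lemma hasSum_one_div_pow_div_mul {x : ℝ} (hx : 1 < x) :
    HasSum (fun n : ℕ => 1 / x ^ (2 * n + 3) / (((n : ℝ) + 1 + 1) * (2 * ((n : ℝ) + 1) + 5)))
      ((2 * x * Real.log x - (x + x ^ 4) * Real.log (x + 1) + (x ^ 4 - x) * Real.log (x - 1)
        + 2 * x ^ 3 + 2 * x / 3 - 3 / (5 * x)) / 3) := by
  have hx0 : 0 < x := by linarith
  have hy0 : 0 < x⁻¹ := inv_pos.2 hx0
  have hy : x⁻¹ < 1 := inv_lt_one_of_one_lt₀ hx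
  have h1 := (hasSum_nat_add_iff' 1).2 (Real.hasSum_pow_div_log_of_abs_lt_one (x := x⁻¹ ^ 2)
    (by rw [abs_of_pos (by positivity)]; exact pow_lt_one₀ hy0.le hy two_ne_zero))
  have h2 := (hasSum_nat_add_iff' 3).2 (Real.hasSum_log_sub_log_of_abs_lt_one (x := x⁻¹)
    (by rwa [abs_of_pos hy0]))
  have h := ((h1.mul_left x).sub (h2.mul_left (x ^ 4))).mul_left (1 / 3)
  have e1 : Real.log (1 - x⁻¹ ^ 2) = Real.log (x - 1) + Real.log (x + 1) - 2 * Real.log x := by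
    have : 1 - x⁻¹ ^ 2 = (x - 1) * (x + 1) / x ^ 2 := by field_simp; ring
    rw [this, Real.log_div (mul_ne_zero (by linarith) (by linarith)) (by positivity),
      Real.log_mul (by linarith) (by linarith), Real.log_pow]
    norm_num
  have e2 : Real.log (1 + x⁻¹) = Real.log (x + 1) - Real.log x := by
    rw [← Real.log_div (by linarith) hx0.ne']
    congr 1
    field_simp
  have e3 : Real.log (1 - x⁻¹) = Real.log (x - 1) - Real.log x := by
    rw [← Real.log_div (by linarith) hx0.ne']
    congr 1
    field_simp
  rw [e1, e2, e3] at h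
  convert h using 1
  · rfl
  · funext n
    have p1 : (x⁻¹ ^ 2) ^ (n + 1 + 1) = (x ^ (2 * n + 3))⁻¹ * x⁻¹ := by
      rw [← pow_mul, inv_pow, ← mul_inv, ← pow_succ]
      ring_nf
    have p2 : x⁻¹ ^ (2 * (n + 3) + 1) = (x ^ (2 * n + 3))⁻¹ * (x ^ 4)⁻¹ := by
      rw [inv_pow, ← mul_inv, ← pow_add]
      ring_nf
    rw [p1, p2]
    generalize x ^ (2 * n + 3) = w
    push_cast
    have : (2 * ((n : ℝ) + 1) + 5) ≠ 0 := by positivity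
    have : (2 * ((n : ℝ) + 3) + 1) ≠ 0 := by positivity
    have : ((n : ℝ) + 1 + 1) ≠ 0 := by positivity
    rcases eq_or_ne w 0 with rfl | hw
    · simp
    field_simp
    ring
  · simp only [Finset.sum_range_succ, Finset.sum_range_zero]
    norm_num
    field_simp
    ring

/-- The sum over `n` of `m ^ (-(2n+3)) / ((n+2)(2n+7))` in closed form, for every `m ≥ 1`. -/
lemma hasSum_nat_one_div_pow_div_mul (m : ℕ) :
    HasSum (fun n : ℕ => 1 / ((m : ℝ) + 1) ^ (2 * n + 3)
        / (((n : ℝ) + 1 + 1) * (2 * ((n : ℝ) + 1) + 5)))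
      ((2 * ((m : ℝ) + 1) * Real.log (m + 1)
        - ((m + 1) + ((m : ℝ) + 1) ^ 4) * Real.log (m + 1 + 1)
        + (((m : ℝ) + 1) ^ 4 - (m + 1)) * Real.log m
        + 2 * ((m : ℝ) + 1) ^ 3 + 2 * (m + 1) / 3 - 3 / (5 * ((m : ℝ) + 1))) / 3) := by
  rcases Nat.eq_zero_or_pos m with rfl | hm
  · convert hasSum_one_div_mul using 1
    · simp
    · norm_num
      ring
  · have hm' : (1 : ℝ) < m + 1 := by
      have : (0 : ℝ) < m := by exact_mod_cast hm
      linarith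
    simpa using hasSum_one_div_pow_div_mul hm'

lemma sum_log_combination_eq (N : ℕ) :
    ∑ m ∈ Finset.range N, ((2 * ((m : ℝ) + 1) * Real.log (m + 1)
        - ((m + 1) + ((m : ℝ) + 1) ^ 4) * Real.log (m + 1 + 1)
        + (((m : ℝ) + 1) ^ 4 - (m + 1)) * Real.log m
        + 2 * ((m : ℝ) + 1) ^ 3 + 2 * (m + 1) / 3 - 3 / (5 * ((m : ℝ) + 1))) / 3)
      = (8 * ∑ m ∈ Finset.range N, ((m : ℝ) + 1) ^ 3 * Real.log (m + 1)
        + 8 * ∑ m ∈ Finset.range N, ((m : ℝ) + 1) * Real.log (m + 1)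
        - (((N : ℝ) + 1) ^ 4 - (N + 1)) * Real.log N
        - (N + (N : ℝ) ^ 4) * Real.log (N + 1)
        + (N : ℝ) ^ 2 * (N + 1) ^ 2 / 2 + N * (N + 1) / 3 - 3 / 5 * (harmonic N : ℝ)) / 3 := by
  induction N with
  | zero => simp
  | succ N ih =>
    rw [Finset.sum_range_succ, ih, Finset.sum_range_succ _ N, Finset.sum_range_succ _ N,
      harmonic_succ]
    push_cast
    field_simp
    ring

lemma tendsto_pow_mul_log_one_sub_inv :
    Tendsto (fun x : ℝ => (x ^ 4 - x) * Real.log (1 - x⁻¹) + x ^ 3 + x ^ 2 / 2 + x / 3)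
      atTop (𝓝 (3 / 4)) := by
  let ε : ℝ → ℝ := fun x => ∑ i ∈ Finset.range 4, x⁻¹ ^ (i + 1) / ((i : ℝ) + 1) + Real.log (1 - x⁻¹)
  have hinv : Tendsto (fun x : ℝ => x⁻¹) atTop (𝓝 0) := tendsto_inv_atTop_zero
  have hε : Tendsto (fun x => x ^ 4 * ε x) atTop (𝓝 0) := by
    refine squeeze_zero_norm' ?_ (a := fun x => 2 * x⁻¹) (by simpa using hinv.const_mul 2)
    filter_upwards [eventually_ge_atTop 2] with x hx
    have hx0 : 0 < x := by linarith
    have hy : x⁻¹ ≤ 2⁻¹ := inv_anti₀ (by norm_num) hx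
    have hb := Real.abs_log_sub_add_sum_range_le (x := x⁻¹)
      (by rw [abs_of_pos (by positivity)]; linarith) 4
    rw [abs_of_pos (inv_pos.2 hx0)] at hb
    rw [norm_mul, Real.norm_eq_abs, Real.norm_eq_abs, abs_of_pos (by positivity : 0 < x ^ 4)]
    calc x ^ 4 * |ε x| ≤ x ^ 4 * (x⁻¹ ^ (4 + 1) / (1 - x⁻¹)) := by gcongr
      _ ≤ x ^ 4 * (x⁻¹ ^ (4 + 1) / 2⁻¹) := by gcongr; linarith
      _ = 2 * x⁻¹ := by rw [inv_pow]; field_simp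
  have h := ((hε.mul ((hinv.pow 3).const_sub 1)).add_const (3 / 4)).add
    (((hinv.div_const 2).add ((hinv.pow 2).div_const 3)).add ((hinv.pow 3).div_const 4))
  norm_num at h
  refine h.congr' ?_
  filter_upwards [eventually_gt_atTop 0] with x hx
  simp only [ε, Finset.sum_range_succ, Finset.sum_range_zero]
  push_cast
  field_simp
  ring

lemma hasSum_log_combination :
    HasSum (fun m : ℕ => (2 * ((m : ℝ) + 1) * Real.log (m + 1)
        - ((m + 1) + ((m : ℝ) + 1) ^ 4) * Real.log (m + 1 + 1)
        + (((m : ℝ) + 1) ^ 4 - (m + 1)) * Real.log m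
        + 2 * ((m : ℝ) + 1) ^ 3 + 2 * (m + 1) / 3 - 3 / (5 * ((m : ℝ) + 1))) / 3)
      ((-8 * (deriv riemannZeta (-3)).re - 8 * (deriv riemannZeta (-1)).re
        - 3 / 5 * Real.eulerMascheroniConstant - 37 / 180) / 3) := by
  rw [hasSum_iff_tendsto_nat_of_nonneg (fun m =>
    (hasSum_nat_one_div_pow_div_mul m).nonneg fun n => by positivity)]
  simp_rw [sum_log_combination_eq]
  have hN : Tendsto (fun N : ℕ => (N : ℝ) + 1) atTop atTop :=
    tendsto_atTop_add_const_right _ _ tendsto_natCast_atTop_atTop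
  have hinv : Tendsto (fun N : ℕ => ((N : ℝ) + 1)⁻¹) atTop (𝓝 0) := tendsto_inv_atTop_zero.comp hN
  have hharm := Real.tendsto_harmonic_sub_log.comp (tendsto_add_atTop_nat 1)
  have h := ((((((tendsto_deriv_riemannZeta_neg_three.const_mul (-8)).sub
    (tendsto_deriv_riemannZeta_neg_one.const_mul 8)).sub (hharm.const_mul (3 / 5))).sub
    (tendsto_pow_mul_log_one_sub_inv.comp hN)).add (hinv.const_mul (3 / 5))).add
    (((hinv.pow 2).div_const 90))).add_const (-11 / 90 + 2 / 3)
  have h' := h.div_const 3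
  refine (h'.congr' ?_).trans_eq ?_
  · filter_upwards [eventually_gt_atTop 0] with N hN0
    have hN0' : (0 : ℝ) < N := by exact_mod_cast hN0
    have e : Real.log (1 - ((N : ℝ) + 1)⁻¹) = Real.log N - Real.log (N + 1) := by
      rw [← Real.log_div hN0'.ne' (by positivity)]
      congr 1
      field_simp
      ring
    simp only [Function.comp_apply, e, harmonic_succ]
    push_cast
    field_simp
    ring
  · congr 1
    ring

lemma hasSum_one_div_pow_riemannZeta (n : ℕ) :
    HasSum (fun m : ℕ => 1 / ((m : ℝ) + 1) ^ (2 * n + 3)) (riemannZeta (2 * (n + 1) + 1)).re := by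
  have hs : Summable fun m : ℕ => 1 / ((m : ℝ) + 1) ^ (2 * n + 3) := by
    have := (summable_nat_add_iff 1).2
      (Real.summable_one_div_nat_pow.2 (by omega : 1 < 2 * n + 3))
    simpa using this
  convert hs.hasSum using 1
  have hz : riemannZeta (2 * (n + 1) + 1)
      = ((∑' m : ℕ, 1 / ((m : ℝ) + 1) ^ (2 * n + 3) : ℝ) : ℂ) := by
    rw [show (2 * (n + 1) + 1 : ℂ) = ((2 * n + 3 : ℕ) : ℂ) by push_cast; ring,
      zeta_eq_tsum_one_div_nat_add_one_cpow
        (by rw [Complex.natCast_re]; exact_mod_cast (by omega : 1 < 2 * n + 3))]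
    push_cast [Complex.ofReal_tsum]
    refine tsum_congr fun m => ?_
    rw [← Complex.cpow_natCast]
    push_cast
    rfl
  rw [hz, Complex.ofReal_re]

/-- The series `∑_{n=1}^∞ ζ(2n+1)/((n+1)(2n+5))` converges and equals
`(1/540)·(1440·log A − 1440·ζ′(−3) − 108·γ − 157)`, where
`A = exp(1/12 − ζ′(−1))` is the Glaisher–Kinkelin constant and `γ` is the
Euler–Mascheroni constant. -/
theorem hasSum_zeta_odd_div :
    HasSum (fun n : ℕ => (riemannZeta (2 * (n + 1) + 1)).re
        / (((n : ℝ) + 1 + 1) * (2 * ((n : ℝ) + 1) + 5)))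
      ((1 / 540) * (1440 * Real.log (Real.exp (1 / 12 - (deriv riemannZeta (-1)).re))
        - 1440 * (deriv riemannZeta (-3)).re
        - 108 * Real.eulerMascheroniConstant - 157)) := by
  let a : ℕ × ℕ → ℝ := fun p => 1 / ((p.1 : ℝ) + 1) ^ (2 * p.2 + 3)
    / (((p.2 : ℝ) + 1 + 1) * (2 * ((p.2 : ℝ) + 1) + 5))
  have ha : Summable a := by
    refine (summable_prod_of_nonneg fun p => by simp only [a]; positivity).2
      ⟨fun m => (hasSum_nat_one_div_pow_div_mul m).summable, ?_⟩
    exact hasSum_log_combination.summable.congr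
      fun m => ((hasSum_nat_one_div_pow_div_mul m).tsum_eq).symm
  have hval := (ha.hasSum.prod_fiberwise hasSum_nat_one_div_pow_div_mul).unique
    hasSum_log_combination
  have hswap := ((Equiv.prodComm ℕ ℕ).hasSum_iff (f := a)).2 ha.hasSum
  have hrow : ∀ n : ℕ, HasSum (fun m => (a ∘ Equiv.prodComm ℕ ℕ) (n, m))
      ((riemannZeta (2 * (n + 1) + 1)).re / (((n : ℝ) + 1 + 1) * (2 * ((n : ℝ) + 1) + 5))) :=
    fun n => (hasSum_one_div_pow_riemannZeta n).div_const _
  have hfin := hswap.prod_fiberwise hrow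
  rw [hval] at hfin
  rw [Real.log_exp]
  refine hfin.trans_eq ?_
  congr 1
  ring
end
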